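/- arXiv:1509.06224 — 3 statements merged into one kernel-verified Lean document; each statement's English description precedes it below -/
import Mathlib

section
/- (Fiedler) Let u(x) = x^n + p x^{n−1} + r(x) be a monic polynomial of degree n over ℂ. Let d_1, …, d_{n−1} ∈ ℂ be pairwise distinct with u(d_j) ≠ 0 for every j. Set α = −p − ∑_{j=1}^{n−1} d_j, and choose ζ_1, …, ζ_{n−1} ∈ ℂ with ζ_j² = −u(d_j) / ∏_{i=1, i≠j}^{n−1}(d_j − d_i). Then the n×n symmetric arrowhead matrix A with diagonal entries d_1, …, d_{n−1}, α and arrow entries ζ_1, …, ζ_{n−1} has characteristic polynomial det(x·I − A) = u(x); equivalently, det(A − x·I) = (−1)^n u(x). -/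
/-- The `(m+1) × (m+1)` symmetric arrowhead matrix `A = [[D, z], [zᵀ, α]]` with
diagonal `d 0, …, d (m-1), α` and arrow entries `z 0, …, z (m-1)`. -/
def arrowhead {K : Type*} [CommRing K] {m : ℕ} (d z : Fin m → K) (α : K) :
    Matrix (Fin (m + 1)) (Fin (m + 1)) K :=
  Matrix.of fun j k =>
    if hj : (j : ℕ) < m then
      if hk : (k : ℕ) < m then
        if j = k then d ⟨j, hj⟩ else 0
      else z ⟨j, hj⟩
    else if hk : (k : ℕ) < m then z ⟨k, hk⟩ else α

/-!
Clearing denominators in the Schur complement of `X - D` gives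
`charpoly A = (X - α) ∏ᵢ (X - dᵢ) - ∑ₖ ζₖ² ∏_{i ≠ k} (X - dᵢ)`.
At `X = dⱼ` every term but one vanishes, so the choice of `ζⱼ` says exactly that `charpoly A` and
`u` agree at `dⱼ`; the choice of `α` says that the trace of `A` is `-p`. The difference of the two
polynomials thus has degree less than `m` and vanishes at the `m` distinct points `dⱼ`.
-/

section BorderedDeterminant

open Matrix

variable {R l n : Type*} [CommRing R] [Fintype l] [DecidableEq l] [Fintype n] [DecidableEq n]

theorem det_fromBlocks_mul_det_pow_card (A : Matrix l l R) (B : Matrix l n R) (C : Matrix n l R)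
    (D : Matrix n n R) :
    (fromBlocks A B C D).det * A.det ^ Fintype.card n =
      A.det * (A.det • D - C * A.adjugate * B).det := by
  have eliminate_upper_right :
      fromBlocks A B C D * fromBlocks 1 (-(A.adjugate * B)) 0 (A.det • 1) =
        fromBlocks A 0 C (A.det • D - C * A.adjugate * B) := by
    rw [fromBlocks_multiply]
    congr 1
    · simp
    · simp [← Matrix.mul_assoc, mul_adjugate]
    · simp
    · simp [← Matrix.mul_assoc, sub_eq_neg_add]
  simpa [det_mul] using congrArg det eliminate_upper_right

theorem det_fromBlocks_of_unique [Unique n] {A : Matrix l l R} (hA : IsRegular A.det)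
    (B : Matrix l n R) (C : Matrix n l R) (D : Matrix n n R) :
    (fromBlocks A B C D).det = (A.det • D - C * A.adjugate * B) default default := by
  apply hA.right
  simpa [mul_comm, det_unique] using det_fromBlocks_mul_det_pow_card A B C D

theorem det_fromBlocks_diagonal_of_unique [Unique n] {a : l → R} (ha : IsRegular (∏ i, a i))
    (B : Matrix l n R) (C : Matrix n l R) (D : Matrix n n R) :
    (fromBlocks (diagonal a) B C D).det =
      (∏ i, a i) * D default default -
        ∑ k, C default k * B k default * ∏ i ∈ Finset.univ.erase k, a i := by
  rw [← det_diagonal] at ha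
  rw [det_fromBlocks_of_unique ha, adjugate_diagonal]
  simp [mul_apply (N := B), mul_diagonal, mul_right_comm]

end BorderedDeterminant

section Arrowhead

open Lagrange Matrix Polynomial

variable {R : Type*} [CommRing R] {m : ℕ} (d z : Fin m → R) (α : R)

theorem arrowhead_eq_reindex_fromBlocks :
    arrowhead d z α = reindex finSumFinEquiv finSumFinEquiv
      (fromBlocks (diagonal d) (replicateCol (Fin 1) z) (replicateRow (Fin 1) z)
        (diagonal fun _ => α)) := by
  ext j k
  cases j using Fin.lastCases <;> cases k using Fin.lastCases <;>
    simp [arrowhead, diagonal_apply]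

theorem charpoly_arrowhead :
    (arrowhead d z α).charpoly =
      nodal Finset.univ d * (X - C α) -
        ∑ k, C (z k ^ 2) * nodal (Finset.univ.erase k) d := by
  have nodal_regular : IsRegular (∏ i, (X - C (d i))) := nodal_monic.isRegular
  rw [arrowhead_eq_reindex_fromBlocks, charpoly_reindex, charpoly, charmatrix_fromBlocks,
    charmatrix_diagonal, det_fromBlocks_diagonal_of_unique nodal_regular]
  simp [nodal, sq]

theorem eval_charpoly_arrowhead (j : Fin m) :
    (arrowhead d z α).charpoly.eval (d j) =
      -(z j ^ 2 * ∏ i ∈ Finset.univ.erase j, (d j - d i)) := by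
  have other_terms_vanish (k : Fin m) (hk : k ≠ j) :
      z k ^ 2 * (nodal (Finset.univ.erase k) d).eval (d j) = 0 := by
    rw [eval_nodal_at_node (by simp [hk.symm]), mul_zero]
  rw [charpoly_arrowhead, eval_sub, eval_mul, eval_nodal_at_node (Finset.mem_univ j), zero_mul,
    zero_sub, eval_finsetSum]
  simp only [eval_mul, eval_C]
  rw [Fintype.sum_eq_single j other_terms_vanish, eval_nodal]

theorem trace_arrowhead : (arrowhead d z α).trace = ∑ j, d j + α := by
  simp [trace, Fin.sum_univ_castSucc, arrowhead]

theorem coeff_charpoly_arrowhead : (arrowhead d z α).charpoly.coeff m = -(∑ j, d j + α) := by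
  rw [← trace_arrowhead d z α, trace_eq_neg_charpoly_coeff, neg_neg, Fintype.card_fin,
    Nat.add_sub_cancel]

end Arrowhead

open Polynomial in
theorem degree_sub_lt_of_monic_of_coeff_eq {R : Type*} [Ring R] {f g : R[X]} {m : ℕ}
    (hf : f.Monic) (hg : g.Monic) (hfm : f.natDegree = m + 1) (hgm : g.natDegree = m + 1)
    (hcoeff : f.coeff m = g.coeff m) : (f - g).degree < m := by
  rw [degree_lt_iff_coeff_zero]
  intro k hk
  rw [coeff_sub, sub_eq_zero]
  obtain rfl | rfl | hlt : k = m ∨ k = m + 1 ∨ m + 1 < k := by omega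
  · exact hcoeff
  · rw [← hfm, hf.coeff_natDegree, hfm, ← hgm, hg.coeff_natDegree]
  · rw [coeff_eq_zero_of_natDegree_lt (hfm ▸ hlt), coeff_eq_zero_of_natDegree_lt (hgm ▸ hlt)]

theorem prod_erase_sub_ne_zero {R ι : Type*} [CommRing R] [IsDomain R] [DecidableEq ι]
    {v : ι → R} (hv : Function.Injective v) (s : Finset ι) (j : ι) :
    ∏ i ∈ s.erase j, (v j - v i) ≠ 0 :=
  Finset.prod_ne_zero_iff.mpr fun _ hi =>
    sub_ne_zero.mpr (hv.ne (Finset.ne_of_mem_erase hi).symm)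

theorem fiedler_charpoly_general {R : Type*} [CommRing R] [IsDomain R] {m : ℕ}
    {u : Polynomial R} (hu : u.Monic) (hdeg : u.natDegree = m + 1) {d ζ : Fin m → R}
    (hd : Function.Injective d) {α : R} (hα : α = -u.coeff m - ∑ j, d j)
    (hζ : ∀ j, ζ j ^ 2 * ∏ i ∈ Finset.univ.erase j, (d j - d i) = -u.eval (d j)) :
    (arrowhead d ζ α).charpoly = u := by
  have coeff_eq : (arrowhead d ζ α).charpoly.coeff m = u.coeff m := by
    rw [coeff_charpoly_arrowhead, hα]
    ring
  have eval_eq (j : Fin m) : (arrowhead d ζ α).charpoly.eval (d j) = u.eval (d j) := by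
    rw [eval_charpoly_arrowhead, hζ, neg_neg]
  have natDegree_eq : (arrowhead d ζ α).charpoly.natDegree = m + 1 := by
    rw [Matrix.charpoly_natDegree_eq_dim, Fintype.card_fin]
  have degree_lt : ((arrowhead d ζ α).charpoly - u).degree < m :=
    degree_sub_lt_of_monic_of_coeff_eq (Matrix.charpoly_monic _) hu natDegree_eq hdeg coeff_eq
  exact Polynomial.eq_of_degree_sub_lt_of_eval_index_eq Finset.univ hd.injOn
    (by rwa [Finset.card_fin]) fun j _ => eval_eq j

/-- **Fiedler.** Let `u` be a monic polynomial over `ℂ` of degree `n = m + 1`, with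
`p` its coefficient of `x^{n-1}`. Let `d_1, …, d_{n-1}` be pairwise distinct with
`u(d_j) ≠ 0`, set `α = -p - ∑_j d_j`, and choose `ζ_j` with
`ζ_j² = -u(d_j) / ∏_{i ≠ j} (d_j - d_i)`. Then the symmetric arrowhead matrix `A`
with diagonal `d_1, …, d_{n-1}, α` and arrow entries `ζ_1, …, ζ_{n-1}` satisfies
`det (x I - A) = u(x)`, i.e. the characteristic polynomial of `A` is `u`. -/
theorem fiedler_charpoly (m : ℕ) (u : Polynomial ℂ) (hu : u.Monic)
    (hdeg : u.natDegree = m + 1) (d ζ : Fin m → ℂ)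
    (hd : Function.Injective d) (hroot : ∀ j, u.eval (d j) ≠ 0)
    (α : ℂ) (hα : α = -u.coeff m - ∑ j, d j)
    (hζ : ∀ j, ζ j ^ 2 = -u.eval (d j) / ∏ i ∈ Finset.univ.erase j, (d j - d i)) :
    (arrowhead d ζ α).charpoly = u := by
  exact fiedler_charpoly_general hu hdeg hd hα fun j => by
    rw [hζ j, div_mul_cancel₀ _ (prod_erase_sub_ne_zero hd _ j)]
end

section
/- Let u be a monic real polynomial of degree n with n distinct real roots λ_1 > λ_2 > ⋯ > λ_n, and let d_1 > d_2 > ⋯ > d_{n−1} be real numbers that interlace the roots, i.e., λ_{j+1} < d_j < λ_j for j = 1, …, n−1. Then for every j = 1, …, n−1, the quantity −u(d_j) / ∏_{i=1, i≠j}^{n−1}(d_j − d_i) is strictly positive; consequently ζ_j = √(−u(d_j)/∏_{i≠j}(d_j − d_i)) is a nonzero real number and the arrowhead matrix A of Fiedler's construction is real and symmetric. -/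
theorem arrowhead_isSymm {K : Type*} [CommRing K] {m : ℕ} (d z : Fin m → K) (α : K) :
    (arrowhead d z α).IsSymm := by
  refine Matrix.IsSymm.ext fun j k => ?_
  simp only [arrowhead, Matrix.of_apply]
  split_ifs <;> grind

theorem monic_eq_nodal_of_eval_eq_zero {R ι : Type*} [CommRing R] [IsDomain R] {u : Polynomial R}
    {s : Finset ι} {v : ι → R} (hu : u.Monic) (hdeg : u.natDegree = s.card)
    (hv : Set.InjOn v s) (hroots : ∀ i ∈ s, u.eval (v i) = 0) :
    u = Lagrange.nodal s v := by
  have degree_u : u.degree = s.card := by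
    rw [Polynomial.degree_eq_natDegree hu.ne_zero, hdeg]
  refine Polynomial.eq_of_degree_le_of_eval_index_eq s hv degree_u.le ?_ ?_ fun i hi => ?_
  · rw [degree_u, Lagrange.degree_nodal]
  · rw [hu.leadingCoeff, Lagrange.nodal_monic.leadingCoeff]
  · rw [hroots i hi, Lagrange.eval_nodal_at_node hi]

/-- The sequence `d` strictly interlaces the sequence `lam`, both listed in decreasing order:
`lam 0 > d 0 > lam 1 > d 1 > ⋯ > d (m - 1) > lam m`. -/
def StrictlyInterlaces {K : Type*} [LT K] {m : ℕ} (d : Fin m → K) (lam : Fin (m + 1) → K) :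
    Prop :=
  ∀ j : Fin m, lam j.succ < d j ∧ d j < lam j.castSucc

namespace StrictlyInterlaces

section Preorder

variable {K : Type*} [Preorder K] {m : ℕ} {d : Fin m → K} {lam : Fin (m + 1) → K}

theorem strictAnti_outer (h : StrictlyInterlaces d lam) : StrictAnti lam :=
  Fin.strictAnti_iff_succ_lt.mpr fun j => (h j).1.trans (h j).2

theorem strictAnti_inner (h : StrictlyInterlaces d lam) : StrictAnti d := fun i j hij =>
  calc
    d j < lam j.castSucc := (h j).2
    _ ≤ lam i.succ := h.strictAnti_outer.antitone (Fin.succ_le_castSucc_iff.mpr hij)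
    _ < d i := (h i).1

end Preorder

section Field

variable {K : Type*} [Field K] [LinearOrder K] [IsStrictOrderedRing K] {m : ℕ}
  {d : Fin m → K} {lam : Fin (m + 1) → K}

-- Removing `lam j.castSucc` pairs each `d i` above `d j` with the term of `lam` just above `d i`,
-- and each `d i` below `d j` with the term just below `d i`, so the two differences agree in sign.
theorem sub_succAbove_div_sub_pos (h : StrictlyInterlaces d lam) {i j : Fin m} (hij : i ≠ j) :
    0 < (d j - lam (j.castSucc.succAbove i)) / (d j - d i) := by
  rcases hij.lt_or_gt with hlt | hgt
  · have d_lt : d j < d i := h.strictAnti_inner hlt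
    rw [Fin.succAbove_of_castSucc_lt _ _ (Fin.castSucc_lt_castSucc_iff.mpr hlt)]
    exact div_pos_of_neg_of_neg (sub_neg.mpr (d_lt.trans (h i).2)) (sub_neg.mpr d_lt)
  · have d_lt : d i < d j := h.strictAnti_inner hgt
    rw [Fin.succAbove_of_le_castSucc _ _ (Fin.castSucc_le_castSucc_iff.mpr hgt.le)]
    exact div_pos (sub_pos.mpr ((h i).1.trans d_lt)) (sub_pos.mpr d_lt)

theorem neg_prod_sub_div_prod_sub_pos (h : StrictlyInterlaces d lam) (j : Fin m) :
    0 < -(∏ k, (d j - lam k)) / ∏ i ∈ Finset.univ.erase j, (d j - d i) := by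
  have split_prod : ∏ k, (d j - lam k) = (d j - lam j.castSucc) * ((d j - lam j.succ) *
      ∏ i ∈ Finset.univ.erase j, (d j - lam (j.castSucc.succAbove i))) := by
    rw [Fin.prod_univ_succAbove _ j.castSucc, ← Finset.mul_prod_erase _ _ (Finset.mem_univ j),
      Fin.succAbove_castSucc_self]
  have ratio_pos : 0 < ∏ i ∈ Finset.univ.erase j,
      (d j - lam (j.castSucc.succAbove i)) / (d j - d i) :=
    Finset.prod_pos fun i hi => h.sub_succAbove_div_sub_pos (Finset.ne_of_mem_erase hi)
  calc
    0 < (lam j.castSucc - d j) * (d j - lam j.succ) *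
        ∏ i ∈ Finset.univ.erase j, (d j - lam (j.castSucc.succAbove i)) / (d j - d i) :=
      mul_pos (mul_pos (sub_pos.mpr (h j).2) (sub_pos.mpr (h j).1)) ratio_pos
    _ = -(∏ k, (d j - lam k)) / ∏ i ∈ Finset.univ.erase j, (d j - d i) := by
      rw [split_prod, Finset.prod_div_distrib]
      ring

theorem neg_eval_div_prod_sub_pos (h : StrictlyInterlaces d lam) {u : Polynomial K}
    (hu : u.Monic) (hdeg : u.natDegree = m + 1) (hroots : ∀ k, u.eval (lam k) = 0) (j : Fin m) :
    0 < -u.eval (d j) / ∏ i ∈ Finset.univ.erase j, (d j - d i) := by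
  have u_eq_nodal : u = Lagrange.nodal Finset.univ lam :=
    monic_eq_nodal_of_eval_eq_zero hu (by rw [hdeg, Finset.card_fin])
      h.strictAnti_outer.injective.injOn fun k _ => hroots k
  rw [u_eq_nodal, Lagrange.eval_nodal]
  exact h.neg_prod_sub_div_prod_sub_pos j

end Field

end StrictlyInterlaces

/-- Let `u` be a monic real polynomial of degree `n = m + 1` with `n` distinct real
roots `λ_1 > λ_2 > ⋯ > λ_n`, and let `d_1 > ⋯ > d_{n-1}` interlace the roots
(`λ_{j+1} < d_j < λ_j`). Then each quantity `-u(d_j) / ∏_{i ≠ j} (d_j - d_i)` is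
strictly positive; consequently `ζ_j = √(-u(d_j)/∏_{i ≠ j}(d_j - d_i))` is a nonzero
real number and the arrowhead matrix `A` of Fiedler's construction is real
symmetric. -/
theorem fiedler_weights_pos (m : ℕ) (u : Polynomial ℝ) (hu : u.Monic)
    (hdeg : u.natDegree = m + 1) (lam : Fin (m + 1) → ℝ) (hlam : StrictAnti lam)
    (hroots : ∀ k, u.eval (lam k) = 0)
    (d : Fin m → ℝ) (hd : StrictAnti d)
    (hinter : ∀ j : Fin m, lam j.succ < d j ∧ d j < lam j.castSucc)
    (α : ℝ) (hα : α = -u.coeff m - ∑ j, d j) :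
    (∀ j : Fin m, 0 < -u.eval (d j) / ∏ i ∈ Finset.univ.erase j, (d j - d i)) ∧
    (∀ j : Fin m,
      Real.sqrt (-u.eval (d j) / ∏ i ∈ Finset.univ.erase j, (d j - d i)) ≠ 0) ∧
    (arrowhead d
      (fun j => Real.sqrt (-u.eval (d j) / ∏ i ∈ Finset.univ.erase j, (d j - d i)))
      α).IsSymm := by
  have interlaces : StrictlyInterlaces d lam := hinter
  have weight_pos (j : Fin m) :
      0 < -u.eval (d j) / ∏ i ∈ Finset.univ.erase j, (d j - d i) :=
    interlaces.neg_eval_div_prod_sub_pos hu hdeg hroots j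
  exact ⟨weight_pos, fun j => (Real.sqrt_pos.mpr (weight_pos j)).ne', arrowhead_isSymm _ _ _⟩
end

section
/- Let A be the n×n real symmetric arrowhead matrix with pairwise distinct diagonal entries d_1, …, d_{n−1}, last diagonal entry α, and arrow entries ζ_1, …, ζ_{n−1}, and fix an index i with 1 ≤ i ≤ n−1 and ζ_i ≠ 0. Let A_i = A − d_i·I. Then A_i is invertible, and its inverse is the matrix B with entries: B_{jj} = 1/(d_j − d_i) for j ∉ {i, n}; B_{ji} = B_{ij} = −ζ_j / ((d_j − d_i)·ζ_i) for j ∉ {i, n}; B_{ni} = B_{in} = 1/ζ_i; B_{ii} = b where b = (1/ζ_i²)·(−(α − d_i) + ∑_{j=1, j≠i}^{n−1} ζ_j²/(d_j − d_i)); and all other entries of B are zero. In particular B is again symmetric, with a 'double arrow' structure. -/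
/-- The explicit "double arrow" matrix `B` claimed to be the inverse of the shifted
arrowhead matrix `A_i = A - d_i I`:  `B_{jj} = 1/(d_j - d_i)` for `j ∉ {i, n}`,
`B_{ji} = B_{ij} = -ζ_j/((d_j - d_i) ζ_i)` for `j ∉ {i, n}`, `B_{ni} = B_{in} = 1/ζ_i`,
`B_{ii} = b = (1/ζ_i²)(-(α - d_i) + ∑_{j ≠ i} ζ_j²/(d_j - d_i))`, all other entries `0`. -/
noncomputable def doubleArrow {m : ℕ} (d z : Fin m → ℝ) (α : ℝ) (i : Fin m) :
    Matrix (Fin (m + 1)) (Fin (m + 1)) ℝ :=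
  Matrix.of fun j k =>
    if hj : (j : ℕ) < m then
      if hk : (k : ℕ) < m then
        if j = k then
          if (j : ℕ) = (i : ℕ) then
            (1 / z i ^ 2) *
              (-(α - d i) + ∑ l ∈ Finset.univ.erase i, z l ^ 2 / (d l - d i))
          else 1 / (d ⟨j, hj⟩ - d i)
        else if (k : ℕ) = (i : ℕ) then -z ⟨j, hj⟩ / ((d ⟨j, hj⟩ - d i) * z i)
        else if (j : ℕ) = (i : ℕ) then -z ⟨k, hk⟩ / ((d ⟨k, hk⟩ - d i) * z i)
        else 0
      else if (j : ℕ) = (i : ℕ) then 1 / z i else 0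
    else if hk : (k : ℕ) < m then
      if (k : ℕ) = (i : ℕ) then 1 / z i else 0
    else 0

/-!
After the shift, the diagonal block `E = D - d_i I` is singular with kernel spanned by the basis
vector `e_i`, and `G = diag (1 / (d_j - d_i))`, with `G_{ii} = 0`, satisfies `E G = I - e_i e_iᵀ`.
In general, if `E G = I - x yᵀ` and `E x = 0`, the bordered matrix `[[E, u], [vᵀ, a]]` with
`v ⬝ x ≠ 0` and `y ⬝ u ≠ 0` is inverted by `G` corrected by multiples of `(G u) yᵀ`, `x (vᵀ G)` and
`x yᵀ`, bordered by multiples of `x` and `y` with corner `0`. For `x = y = e_i` the correction lives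
in row and column `i` only, which produces the double arrow.
-/

open Matrix

section BorderedMatrix

variable {m n o R : Type*}

/-- The matrix `[[E, u], [vᵀ, a]]` obtained from `E` by adding a last column `u`, a last row `v`
and a corner entry `a`. The added index is `Sum.inr 0`. -/
def borderedMatrix (E : Matrix m n R) (u : m → R) (v : n → R) (a : R) :
    Matrix (m ⊕ Fin 1) (n ⊕ Fin 1) R :=
  fromBlocks E (replicateCol (Fin 1) u) (replicateRow (Fin 1) v) !![a]

theorem borderedMatrix_transpose (E : Matrix m n R) (u : m → R) (v : n → R) (a : R) :
    (borderedMatrix E u v a)ᵀ = borderedMatrix Eᵀ v u a := by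
  ext (j | j) (k | k) <;> simp [borderedMatrix]

theorem borderedMatrix_one [DecidableEq n] [Zero R] [One R] :
    borderedMatrix (1 : Matrix n n R) 0 0 1 = 1 := by
  ext (j | j) (k | k) <;> simp [borderedMatrix, one_apply, eq_iff_true_of_subsingleton]

theorem borderedMatrix_sub_smul_one [DecidableEq n] [Ring R] (E : Matrix n n R) (u v : n → R)
    (a c : R) :
    borderedMatrix E u v a - c • 1 = borderedMatrix (E - c • 1) u v (a - c) := by
  ext (j | j) (k | k) <;> simp [borderedMatrix, one_apply, eq_iff_true_of_subsingleton]

theorem borderedMatrix_mul [Fintype n] [CommSemiring R] (E : Matrix m n R) (u : m → R)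
    (v : n → R) (a : R) (F : Matrix n o R) (x : n → R) (y : o → R) (b : R) :
    borderedMatrix E u v a * borderedMatrix F x y b =
      borderedMatrix (E * F + vecMulVec u y) (E *ᵥ x + b • u) (v ᵥ* F + a • y)
        (v ⬝ᵥ x + a * b) := by
  ext (j | j) (k | k) <;>
    simp [borderedMatrix, mul_apply, vecMulVec_apply, mulVec, vecMul, dotProduct, mul_comm]

end BorderedMatrix

section BorderedInverse

variable {n K : Type*} [Fintype n] [Field K]

/-- The inverse of `borderedMatrix E u v a` for a square matrix `E` of corank one, where `x` spans
the kernel of `E` and `G` is an inverse of `E` up to a rank one defect, `E * G = 1 - x yᵀ`. -/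
def borderedInverse (G : Matrix n n K) (u v : n → K) (a : K) (x y : n → K) :
    Matrix (n ⊕ Fin 1) (n ⊕ Fin 1) K :=
  borderedMatrix
    (G - (y ⬝ᵥ u)⁻¹ • vecMulVec (G *ᵥ u) y - (v ⬝ᵥ x)⁻¹ • vecMulVec x (v ᵥ* G) +
      ((v ⬝ᵥ x)⁻¹ * (y ⬝ᵥ u)⁻¹ * (v ⬝ᵥ G *ᵥ u - a)) • vecMulVec x y)
    ((v ⬝ᵥ x)⁻¹ • x) ((y ⬝ᵥ u)⁻¹ • y) 0

theorem borderedMatrix_mul_borderedInverse [DecidableEq n] {E G : Matrix n n K}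
    {u v x y : n → K} (a : K) (hEG : E * G = 1 - vecMulVec x y) (hEx : E *ᵥ x = 0)
    (hyu : y ⬝ᵥ u ≠ 0) (hvx : v ⬝ᵥ x ≠ 0) :
    borderedMatrix E u v a * borderedInverse G u v a x y = 1 := by
  have hEGu : E *ᵥ (G *ᵥ u) = u - (y ⬝ᵥ u) • x := by
    rw [mulVec_mulVec, hEG, sub_mulVec, one_mulVec, vecMulVec_mulVec, op_smul_eq_smul]
  rw [borderedInverse, borderedMatrix_mul, ← borderedMatrix_one]
  congr 1
  · simp only [mul_add, mul_sub, Matrix.mul_smul, mul_vecMulVec, hEG, hEx, hEGu, zero_vecMulVec,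
      sub_vecMulVec, smul_vecMulVec, vecMulVec_smul, smul_sub, smul_zero, smul_smul,
      inv_mul_cancel₀ hyu, one_smul]
    abel
  · simp [mulVec_smul, hEx]
  · ext k
    simp only [vecMul_add, vecMul_sub, vecMul_smul, vecMul_vecMulVec, dotProduct_mulVec,
      Pi.add_apply, Pi.sub_apply, Pi.smul_apply, smul_eq_mul, Pi.zero_apply]
    field_simp
    ring
  · simp [hvx]

end BorderedInverse

section DoubleArrow

variable {ι K : Type*} [Fintype ι] [DecidableEq ι] [Field K]

/-- The matrix `doubleArrow`, over any field and with an arbitrary finite index type `ι` in place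
of `Fin m`; the last index is `Sum.inr 0`. -/
def doubleArrowBlock (d z : ι → K) (α : K) (i : ι) : Matrix (ι ⊕ Fin 1) (ι ⊕ Fin 1) K :=
  borderedMatrix
    (of fun j k =>
      if j = k then
        if j = i then
          (1 / z i ^ 2) * (-(α - d i) + ∑ l ∈ Finset.univ.erase i, z l ^ 2 / (d l - d i))
        else 1 / (d j - d i)
      else if k = i then -z j / ((d j - d i) * z i)
      else if j = i then -z k / ((d k - d i) * z i)
      else 0)
    (Pi.single i (1 / z i)) (Pi.single i (1 / z i)) 0

theorem doubleArrowBlock_isSymm (d z : ι → K) (α : K) (i : ι) :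
    (doubleArrowBlock d z α i).IsSymm := by
  rw [IsSymm, doubleArrowBlock, borderedMatrix_transpose]
  congr 1
  ext j k
  simp only [transpose_apply, of_apply]
  split_ifs <;> simp_all

-- The diagonal entry at `j = i` is the junk value `0⁻¹ = 0`, which drops the term `l = i`.
theorem dotProduct_diagonal_inv_sub_mulVec (d z : ι → K) (i : ι) :
    z ⬝ᵥ (diagonal fun j => (d j - d i)⁻¹) *ᵥ z =
      ∑ l ∈ Finset.univ.erase i, z l ^ 2 / (d l - d i) := by
  rw [Finset.sum_erase _ (by simp), dotProduct]
  refine Finset.sum_congr rfl fun l _ => ?_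
  rw [mulVec_diagonal]
  ring

theorem doubleArrowBlock_eq_borderedInverse (d z : ι → K) (α : K) (i : ι) :
    doubleArrowBlock d z α i =
      borderedInverse (diagonal fun j => (d j - d i)⁻¹) z z (α - d i) (Pi.single i 1)
        (Pi.single i 1) := by
  rw [doubleArrowBlock, borderedInverse, dotProduct_diagonal_inv_sub_mulVec, dotProduct_single_one,
    single_one_dotProduct]
  congr 1
  · ext j k
    simp only [of_apply, Matrix.add_apply, Matrix.sub_apply, Matrix.smul_apply, smul_eq_mul,
      diagonal_apply, vecMulVec_apply, mulVec_diagonal, vecMul_diagonal, Pi.single_apply]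
    rcases eq_or_ne j i with hj | hj <;> rcases eq_or_ne k i with hk | hk
    · simp only [hj, hk, ↓reduceIte, sub_self]
      ring
    · simp only [hj, hk, hk.symm, ↓reduceIte, div_eq_mul_inv, mul_inv]
      ring
    · simp only [hj, hk, ↓reduceIte, div_eq_mul_inv, mul_inv]
      ring
    · simp [hj, hk]
  · ext j; simp [Pi.single_apply]
  · ext j; simp [Pi.single_apply]

theorem diagonal_sub_mul_diagonal_inv_sub {d : ι → K} {i : ι} (hd : ∀ j ≠ i, d j ≠ d i) :
    (diagonal d - d i • 1) * diagonal (fun j => (d j - d i)⁻¹) =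
      1 - vecMulVec (Pi.single i 1) (Pi.single i 1) := by
  rw [smul_one_eq_diagonal, diagonal_sub, diagonal_mul_diagonal,
    ← single_eq_single_vecMulVec_single, ← diagonal_single, ← diagonal_one, diagonal_sub]
  congr 1
  ext j
  by_cases hj : j = i
  · simp [hj]
  · simp [hj, sub_ne_zero.mpr (hd j hj)]

end DoubleArrow

theorem arrowhead_eq_reindex {K : Type*} [CommRing K] {m : ℕ} (d z : Fin m → K) (α : K) :
    arrowhead d z α =
      reindexAlgEquiv K K finSumFinEquiv (borderedMatrix (diagonal d) z z α) := by
  apply (reindexAlgEquiv K K finSumFinEquiv).symm.injective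
  ext (j | j) (k | k) <;> simp [arrowhead, borderedMatrix, diagonal_apply]

theorem doubleArrow_eq_reindex {m : ℕ} (d z : Fin m → ℝ) (α : ℝ) (i : Fin m) :
    doubleArrow d z α i = reindexAlgEquiv ℝ ℝ finSumFinEquiv (doubleArrowBlock d z α i) := by
  apply (reindexAlgEquiv ℝ ℝ finSumFinEquiv).symm.injective
  ext (j | j) (k | k) <;>
    simp [doubleArrow, doubleArrowBlock, borderedMatrix, Pi.single_apply, Fin.val_inj]

theorem shifted_arrowhead_inverse_general {ι K : Type*} [Fintype ι] [DecidableEq ι]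
    [Field K] (d z : ι → K) (α : K) (i : ι) (hd : ∀ j ≠ i, d j ≠ d i) (hz : z i ≠ 0) :
    (borderedMatrix (diagonal d) z z α - d i • 1) * doubleArrowBlock d z α i = 1 ∧
      doubleArrowBlock d z α i * (borderedMatrix (diagonal d) z z α - d i • 1) = 1 ∧
      (doubleArrowBlock d z α i).IsSymm := by
  have right_inverse :
      (borderedMatrix (diagonal d) z z α - d i • 1) * doubleArrowBlock d z α i = 1 := by
    rw [borderedMatrix_sub_smul_one, doubleArrowBlock_eq_borderedInverse]
    apply borderedMatrix_mul_borderedInverse _ (diagonal_sub_mul_diagonal_inv_sub hd)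
    · ext j
      by_cases h : j = i <;> simp [h]
    · simpa using hz
    · simpa using hz
  exact ⟨right_inverse, mul_eq_one_comm.mp right_inverse, doubleArrowBlock_isSymm d z α i⟩

/-- Let `A` be the real symmetric arrowhead matrix with pairwise distinct diagonal
entries `d_1, …, d_{n-1}`, last diagonal entry `α`, arrow entries `ζ_1, …, ζ_{n-1}`,
and fix `i ≤ n - 1` with `ζ_i ≠ 0`.  Then `A_i = A - d_i I` is invertible with inverse
the symmetric "double arrow" matrix `B` described above. -/
theorem shifted_arrowhead_inverse (m : ℕ) (d z : Fin m → ℝ) (α : ℝ) (i : Fin m)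
    (hd : Function.Injective d) (hz : z i ≠ 0) :
    (arrowhead d z α - d i • (1 : Matrix (Fin (m + 1)) (Fin (m + 1)) ℝ)) *
        doubleArrow d z α i = 1 ∧
    doubleArrow d z α i *
        (arrowhead d z α - d i • (1 : Matrix (Fin (m + 1)) (Fin (m + 1)) ℝ)) = 1 ∧
    (doubleArrow d z α i).IsSymm := by
  obtain ⟨right_inverse, left_inverse, symm⟩ :=
    shifted_arrowhead_inverse_general d z α i (fun _ hj => hd.ne hj) hz
  rw [arrowhead_eq_reindex, doubleArrow_eq_reindex, ← map_one (reindexAlgEquiv ℝ ℝ finSumFinEquiv),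
    ← map_smul, ← map_sub, ← map_mul, ← map_mul, right_inverse, left_inverse]
  exact ⟨rfl, rfl, symm.submatrix _⟩
end
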